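/- The quantity f_Δ(n_i, k_i) := ∫_{SU(2)} ∏_{i=1}^{3} ⟨n_i| X |n_i⟩^{2k_i} dX, where the integral is over Haar measure, is a nonnegative real number whenever k₁n₁ + k₂n₂ + k₃n₃ = 0; in fact f_Δ = ((1-n₁·n₂)^p (1-n₂·n₃)^q (1-n₁·n₃)^r / 2^{p+q+r}) · (p+q)!(q+r)!(p+r)! / ((p+q+r+1)! p! q! r!) where p = k₁+k₂-k₃, q = k₂+k₃-k₁, r = k₁+k₃-k₂ are nonnegative integers. -/

import Mathlib

open Matrix Complex

/-- The Pauli matrices `σ₁, σ₂, σ₃`. -/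
noncomputable def pauli : Fin 3 → Matrix (Fin 2) (Fin 2) ℂ
  | 0 => !![0, 1; 1, 0]
  | 1 => !![0, -Complex.I; Complex.I, 0]
  | 2 => !![1, 0; 0, -1]

/-- `n·σ` for a vector `n ∈ ℝ³`. -/
noncomputable def dotSigma (n : Fin 3 → ℝ) : Matrix (Fin 2) (Fin 2) ℂ :=
  ∑ i, (n i : ℂ) • pauli i

/-- `v` is a unit-norm `+1`-eigenvector of `n·σ`, i.e. a spin-1/2 coherent state `|n⟩`. -/
def IsCoherentState (n : Fin 3 → ℝ) (v : Fin 2 → ℂ) : Prop :=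
  (dotSigma n).mulVec v = v ∧ star v ⬝ᵥ v = 1

open MeasureTheory

/-- `SU(2)` as a subgroup of the unitary group: the kernel of the determinant. -/
noncomputable def SU2 : Subgroup (Matrix.unitaryGroup (Fin 2) ℂ) :=
  MonoidHom.ker (Matrix.detMonoidHom.comp (Matrix.unitaryGroup (Fin 2) ℂ).subtype)

noncomputable instance : MeasurableSpace SU2 := borel _

/-- The underlying matrix of an element of `SU(2)`. -/
def SU2.mat (X : SU2) : Matrix (Fin 2) (Fin 2) ℂ := (X : Matrix.unitaryGroup (Fin 2) ℂ)

instance : BorelSpace SU2 := ⟨rfl⟩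

lemma su2_mem (X : SU2) : SU2.mat X ∈ Matrix.unitaryGroup (Fin 2) ℂ := X.1.2

lemma su2_det (X : SU2) : (SU2.mat X).det = 1 := X.2

lemma su2_cont : Continuous (SU2.mat) := continuous_subtype_val.comp continuous_subtype_val

lemma su2_mat_mul (X Y : SU2) : SU2.mat (X * Y) = SU2.mat X * SU2.mat Y := rfl

def mkSU2 (M : Matrix (Fin 2) (Fin 2) ℂ) (h : M ∈ Matrix.unitaryGroup (Fin 2) ℂ) (hd : M.det = 1) :
    SU2 := ⟨⟨M, h⟩, hd⟩

lemma mkSU2_mat (M : Matrix (Fin 2) (Fin 2) ℂ) (h : M ∈ Matrix.unitaryGroup (Fin 2) ℂ)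
    (hd : M.det = 1) : SU2.mat (mkSU2 M h hd) = M := rfl

lemma su2_range : Set.range SU2.mat =
    {M | M ∈ Matrix.unitaryGroup (Fin 2) ℂ} ∩ {M | M.det = 1} := by
  ext M
  constructor
  · rintro ⟨X, rfl⟩
    exact ⟨su2_mem X, su2_det X⟩
  · rintro ⟨h, hd⟩
    exact ⟨mkSU2 M h hd, rfl⟩

instance su2_compact : CompactSpace SU2 := by
  have hind : Topology.IsInducing SU2.mat :=
    Topology.IsInducing.subtypeVal.comp Topology.IsInducing.subtypeVal
  rw [← isCompact_univ_iff, hind.isCompact_iff, Set.image_univ, su2_range]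
  have hK : IsCompact (Set.univ.pi fun _ : Fin 2 => Set.univ.pi fun _ : Fin 2 =>
      Metric.closedBall (0:ℂ) 1) :=
    isCompact_univ_pi fun _ => isCompact_univ_pi fun _ => isCompact_closedBall _ _
  refine IsCompact.of_isClosed_subset hK ?_ ?_
  · refine IsClosed.inter ?_ ?_
    · have : {M : Matrix (Fin 2) (Fin 2) ℂ | M ∈ Matrix.unitaryGroup (Fin 2) ℂ} =
          {M | M * star M = 1} := by
        ext M; exact Matrix.mem_unitaryGroup_iff
      rw [this]
      exact isClosed_eq (by fun_prop) continuous_const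
    · exact isClosed_eq (by fun_prop) continuous_const
  · rintro M ⟨h, -⟩ i - j -
    simpa using entry_norm_bound_of_unitary h i j

lemma su2_right (μ : Measure SU2) [μ.IsHaarMeasure] [IsProbabilityMeasure μ] :
    μ.IsMulRightInvariant := by
  refine ⟨fun g => ?_⟩
  have : IsProbabilityMeasure (μ.map (· * g)) :=
    Measure.isProbabilityMeasure_map (continuous_mul_const g).measurable.aemeasurable
  have := Measure.isHaarMeasure_map_mul_right μ g
  exact Measure.isHaarMeasure_eq_of_isProbabilityMeasure _ _

lemma su2_integrable (μ : Measure SU2) [μ.IsHaarMeasure] [IsProbabilityMeasure μ]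
    {f : SU2 → ℂ} (hf : Continuous f) : Integrable f μ :=
  hf.integrable_of_hasCompactSupport (HasCompactSupport.of_compactSpace f)

lemma su2_form (X : SU2) : SU2.mat X 1 0 = - star (SU2.mat X 0 1) ∧
    SU2.mat X 1 1 = star (SU2.mat X 0 0) ∧
    SU2.mat X 0 0 * star (SU2.mat X 0 0) + SU2.mat X 0 1 * star (SU2.mat X 0 1) = 1 := by
  have h := Matrix.mem_unitaryGroup_iff.1 (su2_mem X)
  have hd := su2_det X
  rw [Matrix.det_fin_two] at hd
  have h00 := congrFun (congrFun h 0) 0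
  have h10 := congrFun (congrFun h 1) 0
  simp [Matrix.mul_apply, Fin.sum_univ_two] at h00 h10
  simp
  refine ⟨?_, ?_, h00⟩
  · linear_combination (starRingEnd ℂ (SU2.mat X 0 1)) * (-hd) + (SU2.mat X 0 0) * h10 - (SU2.mat X 1 0) * h00
  · linear_combination (starRingEnd ℂ (SU2.mat X 0 0)) * hd + (SU2.mat X 0 1) * h10 - (SU2.mat X 1 1) * h00

noncomputable def rotU (x y : ℝ) (h : x ^ 2 + y ^ 2 = 1) : SU2 :=
  mkSU2 !![(x:ℂ), -y; y, x] (by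
    have h' : (x:ℂ) ^ 2 + (y:ℂ) ^ 2 = 1 := by exact_mod_cast h
    rw [Matrix.mem_unitaryGroup_iff]
    ext i j
    fin_cases i <;> fin_cases j <;> simp [Matrix.mul_apply, Fin.sum_univ_two] <;> 
      first | linear_combination h' | ring1) (by
    have h' : (x:ℂ) ^ 2 + (y:ℂ) ^ 2 = 1 := by exact_mod_cast h
    simp [Matrix.det_fin_two]; linear_combination h')

noncomputable def diagU (θ : ℝ) : SU2 :=
  mkSU2 !![cexp (θ * I), 0; 0, cexp (-(θ * I))] (by
    rw [Matrix.mem_unitaryGroup_iff]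
    ext i j
    fin_cases i <;> fin_cases j <;> 
      simp [Matrix.mul_apply, Fin.sum_univ_two, ← Complex.exp_conj, ← Complex.exp_add]) (by
    simp [Matrix.det_fin_two, ← Complex.exp_add])

noncomputable def mom (μ : Measure SU2) (i j k l : ℕ) : ℂ :=
  ∫ X : SU2, (SU2.mat X 0 0) ^ i * (star (SU2.mat X 0 0)) ^ j * (SU2.mat X 0 1) ^ k *
    (star (SU2.mat X 0 1)) ^ l ∂μ

@[fun_prop]
lemma su2_cont_entry (i j : Fin 2) : Continuous fun X : SU2 => SU2.mat X i j :=
  su2_cont.matrix_elem i j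

lemma mom_left (μ : Measure SU2) [μ.IsHaarMeasure] [IsProbabilityMeasure μ] (i j k l : ℕ) (θ : ℝ) :
    mom μ i j k l = cexp (θ * I * ((i:ℂ) - j + k - l)) * mom μ i j k l := by
  conv_lhs => rw [mom, ← integral_mul_left_eq_self _ (diagU θ)]
  rw [mom, ← integral_const_mul]
  congr 1; ext X
  have : cexp (θ * I * ((i:ℂ) - j + k - l)) =
      cexp (θ * I) ^ i * cexp (-(θ * I)) ^ j * cexp (θ * I) ^ k * cexp (-(θ * I)) ^ l := by
    simp only [← Complex.exp_nat_mul, ← Complex.exp_add]; congr 1; ring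
  rw [this]
  simp [su2_mat_mul, diagU, mkSU2_mat, Matrix.mul_apply, Fin.sum_univ_two, ← Complex.exp_conj, mul_pow]
  ring

lemma mom_right (μ : Measure SU2) [μ.IsHaarMeasure] [IsProbabilityMeasure μ] (i j k l : ℕ) (θ : ℝ) :
    mom μ i j k l = cexp (θ * I * ((i:ℂ) - j - k + l)) * mom μ i j k l := by
  have := su2_right μ
  conv_lhs => rw [mom, ← integral_mul_right_eq_self _ (diagU θ)]
  rw [mom, ← integral_const_mul]
  congr 1; ext X
  have : cexp (θ * I * ((i:ℂ) - j - k + l)) =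
      cexp (θ * I) ^ i * cexp (-(θ * I)) ^ j * cexp (-(θ * I)) ^ k * cexp (θ * I) ^ l := by
    simp only [← Complex.exp_nat_mul, ← Complex.exp_add]; congr 1; ring
  rw [this]
  simp [su2_mat_mul, diagU, mkSU2_mat, Matrix.mul_apply, Fin.sum_univ_two, ← Complex.exp_conj, mul_pow]
  ring

lemma zero_of_phase (z : ℂ) (N : ℤ) (hN : N ≠ 0) (h : ∀ θ : ℝ, z = cexp (θ * I * (N:ℂ)) * z) :
    z = 0 := by
  have h1 := h (Real.pi / N)
  have hN' : (N:ℂ) ≠ 0 := by exact_mod_cast hN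
  have : (((Real.pi / N : ℝ)) : ℂ) * I * (N:ℂ) = Real.pi * I := by
    push_cast; field_simp
  rw [this, Complex.exp_pi_mul_I] at h1
  linear_combination h1 / 2

lemma mom_zero (μ : Measure SU2) [μ.IsHaarMeasure] [IsProbabilityMeasure μ] (i j k l : ℕ)
    (h : ¬ (i = j ∧ k = l)) : mom μ i j k l = 0 := by
  by_cases h1 : (i:ℤ) - j + k - l = 0
  · apply zero_of_phase _ ((i:ℤ) - j - k + l) (by omega)
    intro θ
    have := mom_right μ i j k l θ
    push_cast; exact this
  · apply zero_of_phase _ _ h1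
    intro θ
    have := mom_left μ i j k l θ
    push_cast; exact this

lemma rot_int (μ : Measure SU2) [μ.IsHaarMeasure] [IsProbabilityMeasure μ] (m : ℕ) (t : ℝ) :
    ∫ X : SU2, (SU2.mat X 0 0 + t * SU2.mat X 0 1) ^ m *
      (star (SU2.mat X 0 0) + t * star (SU2.mat X 0 1)) ^ m ∂μ
      = (1 + (t:ℂ) ^ 2) ^ m * mom μ m m 0 0 := by
  have := su2_right μ
  have hpos : 0 < 1 + t ^ 2 := by positivity
  set s := Real.sqrt (1 + t ^ 2) with hs
  have hs2 : s ^ 2 = 1 + t ^ 2 := Real.sq_sqrt hpos.le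
  have hs0 : s ≠ 0 := (Real.sqrt_pos.2 hpos).ne'
  have hrot : (1 / s) ^ 2 + (t / s) ^ 2 = 1 := by
    field_simp; linarith
  conv_rhs => rw [mom, ← integral_mul_right_eq_self _ (rotU _ _ hrot), ← integral_const_mul]
  congr 1; ext X
  have hs2' : (s:ℂ) ^ 2 = 1 + (t:ℂ) ^ 2 := by exact_mod_cast hs2
  have hs0' : (s:ℂ) ≠ 0 := by exact_mod_cast hs0
  rw [← hs2']
  simp [su2_mat_mul, rotU, mkSU2_mat, Matrix.mul_apply, Fin.sum_univ_two]
  rw [← mul_pow, ← mul_pow, ← mul_pow]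
  congr 1
  field_simp

lemma rot_exp (μ : Measure SU2) [μ.IsHaarMeasure] [IsProbabilityMeasure μ] (m : ℕ) (t : ℝ) :
    ∫ X : SU2, (SU2.mat X 0 0 + t * SU2.mat X 0 1) ^ m *
      (star (SU2.mat X 0 0) + t * star (SU2.mat X 0 1)) ^ m ∂μ
      = ∑ i ∈ Finset.range (m + 1), (m.choose i : ℂ) ^ 2 * mom μ i i (m - i) (m - i) *
          ((t:ℂ) ^ 2) ^ (m - i) := by
  have e : ∀ X : SU2, (SU2.mat X 0 0 + t * SU2.mat X 0 1) ^ m *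
      (star (SU2.mat X 0 0) + t * star (SU2.mat X 0 1)) ^ m =
      ∑ i ∈ Finset.range (m + 1), ∑ j ∈ Finset.range (m + 1),
        ((m.choose i : ℂ) * m.choose j * t ^ (m - i) * t ^ (m - j)) *
        ((SU2.mat X 0 0) ^ i * (star (SU2.mat X 0 0)) ^ j * (SU2.mat X 0 1) ^ (m - i) *
          (star (SU2.mat X 0 1)) ^ (m - j)) := by
    intro X
    rw [add_pow, add_pow, Finset.sum_mul_sum]
    refine Finset.sum_congr rfl fun i _ => Finset.sum_congr rfl fun j _ => ?_
    rw [mul_pow, mul_pow]; ring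
  simp_rw [e]
  rw [integral_finsetSum]
  swap
  · intro i _; exact su2_integrable μ (by fun_prop)
  refine Finset.sum_congr rfl fun i hi => ?_
  rw [integral_finsetSum]
  swap
  · intro i _; exact su2_integrable μ (by fun_prop)
  simp_rw [integral_const_mul]
  rw [Finset.sum_eq_single i]
  · change _ * mom μ i i (m - i) (m - i) = _
    ring
  · intro j _ hji
    change _ * mom μ i j (m - i) (m - j) = _
    rw [mom_zero _ _ _ _ _ (by tauto), mul_zero]
  · intro h; exact absurd hi h

lemma mom_norm (μ : Measure SU2) [μ.IsHaarMeasure] [IsProbabilityMeasure μ] (m : ℕ) :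
    ∑ i ∈ Finset.range (m + 1), (m.choose i : ℂ) * mom μ i i (m - i) (m - i) = 1 := by
  have e : ∀ X : SU2, (1:ℂ) =
      ∑ i ∈ Finset.range (m + 1), (m.choose i : ℂ) *
        ((SU2.mat X 0 0) ^ i * (star (SU2.mat X 0 0)) ^ i * (SU2.mat X 0 1) ^ (m - i) *
          (star (SU2.mat X 0 1)) ^ (m - i)) := by
    intro X
    rw [← one_pow m, ← (su2_form X).2.2, add_pow]
    refine Finset.sum_congr rfl fun i _ => ?_
    rw [mul_pow, mul_pow]; ring
  have h1 : ∫ X : SU2, (1:ℂ) ∂μ = 1 := by simp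
  conv_rhs => rw [← h1, integral_congr_ae (Filter.Eventually.of_forall e)]
  rw [integral_finsetSum]
  swap
  · intro i _; exact su2_integrable μ (by fun_prop)
  simp_rw [integral_const_mul]
  rfl

lemma mom_rel (μ : Measure SU2) [μ.IsHaarMeasure] [IsProbabilityMeasure μ] (m i : ℕ) (hi : i ≤ m) :
    (m.choose i : ℂ) * mom μ i i (m - i) (m - i) = mom μ m m 0 0 := by
  let P : Polynomial ℂ := ∑ i ∈ Finset.range (m + 1),
    Polynomial.C ((m.choose i : ℂ) ^ 2 * mom μ i i (m - i) (m - i)) * Polynomial.X ^ (m - i)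
  let Q : Polynomial ℂ := ∑ i ∈ Finset.range (m + 1),
    Polynomial.C ((m.choose i : ℂ) * mom μ m m 0 0) * Polynomial.X ^ (m - i)
  have hPQ : P = Q := by
    apply Polynomial.eq_of_infinite_eval_eq
    have hinf : (Set.range fun k : ℕ => (((k:ℝ):ℂ) ^ 2)).Infinite := by
      apply Set.infinite_range_of_injective
      intro a b h
      have : ((a ^ 2 : ℕ) : ℂ) = ((b ^ 2 : ℕ) : ℂ) := by simpa using h
      have h2 : a ^ 2 = b ^ 2 := by exact_mod_cast this
      exact Nat.pow_left_injective (n := 2) (by norm_num) h2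
    refine hinf.mono ?_
    rintro _ ⟨k, rfl⟩
    have := (rot_exp μ m k).symm.trans (rot_int μ m k)
    simp only [Set.mem_ofPred_eq, P, Q, Polynomial.eval_finsetSum, Polynomial.eval_mul,
      Polynomial.eval_C, Polynomial.eval_pow, Polynomial.eval_X]
    rw [this, add_pow, Finset.sum_mul]
    refine Finset.sum_congr rfl fun i _ => ?_
    rw [one_pow]; ring
  have hc : ∀ f : ℕ → ℂ, (∑ i ∈ Finset.range (m + 1),
      Polynomial.C (f i) * Polynomial.X ^ (m - i)).coeff (m - i) = f i := by
    intro f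
    rw [Polynomial.finsetSum_coeff, Finset.sum_eq_single i]
    · simp
    · intro j hj hji
      rw [Polynomial.coeff_C_mul_X_pow, if_neg]
      have := Finset.mem_range.1 hj
      omega
    · intro h; exact absurd (Finset.mem_range.2 (by omega)) h
  have h := congrArg (fun p => p.coeff (m - i)) hPQ
  simp only [P, Q] at h
  rw [hc (fun i => (m.choose i : ℂ) ^ 2 * mom μ i i (m - i) (m - i)),
    hc (fun i => (m.choose i : ℂ) * mom μ m m 0 0)] at h
  have h0 : (m.choose i : ℂ) ≠ 0 := by exact_mod_cast (Nat.choose_pos hi).ne'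
  apply mul_left_cancel₀ h0
  linear_combination h

lemma mom_diag (μ : Measure SU2) [μ.IsHaarMeasure] [IsProbabilityMeasure μ] (i j : ℕ) :
    mom μ i i j j = (i.factorial * j.factorial : ℂ) / ((i + j + 1).factorial) := by
  have h1 := mom_norm μ (i + j)
  rw [Finset.sum_congr rfl (fun k hk => mom_rel μ (i + j) k
    (by have := Finset.mem_range.1 hk; omega))] at h1
  have h2 := mom_rel μ (i + j) i (by omega)
  simp at h1
  rw [Nat.add_sub_cancel_left] at h2
  rw [← h2] at h1
  have h3 : ((i + j).choose i : ℂ) * i.factorial * j.factorial = (i + j).factorial := by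
    have := Nat.choose_mul_factorial_mul_factorial (Nat.le_add_right i j)
    rw [Nat.add_sub_cancel_left] at this
    exact_mod_cast this
  rw [Nat.factorial_succ]
  have f1 : ((i + j).factorial : ℂ) ≠ 0 := by exact_mod_cast Nat.factorial_ne_zero _
  have f2 : ((i:ℂ) + j + 1) ≠ 0 := by exact_mod_cast Nat.succ_ne_zero (i + j)
  push_cast
  rw [eq_div_iff (mul_ne_zero f2 f1), ← h3]
  linear_combination (i.factorial * j.factorial : ℂ) * h1

lemma multinomial_univ_cast {n : ℕ} (k : Fin n → ℕ) (N : ℕ) (h : ∑ i, k i = N) :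
    (Nat.multinomial Finset.univ k : ℂ) = (N.factorial : ℂ) / ∏ i, ((k i).factorial : ℂ) := by
  have := Nat.multinomial_spec Finset.univ k
  rw [h] at this
  have hp : (∏ i, ((k i).factorial : ℂ)) ≠ 0 :=
    Finset.prod_ne_zero_iff.2 fun i _ => by exact_mod_cast Nat.factorial_ne_zero _
  rw [eq_div_iff hp, ← this]
  push_cast; ring

lemma cat_int (μ : Measure SU2) [μ.IsHaarMeasure] [IsProbabilityMeasure μ] (m : ℕ) (α δ β γ : ℂ) :
    ∫ X : SU2, (α * SU2.mat X 0 0 + δ * star (SU2.mat X 0 0) + β * SU2.mat X 0 1 +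
      γ * star (SU2.mat X 0 1)) ^ (2 * m) ∂μ
      = ((2 * m).factorial : ℂ) / (m.factorial * (m + 1).factorial) * (α * δ + β * γ) ^ m := by
  have e : ∀ X : SU2, (α * SU2.mat X 0 0 + δ * star (SU2.mat X 0 0) + β * SU2.mat X 0 1 +
      γ * star (SU2.mat X 0 1)) ^ (2 * m) =
      ∑ k ∈ Finset.piAntidiag (Finset.univ : Finset (Fin 4)) (2 * m),
        ((Nat.multinomial Finset.univ k : ℂ) * (α ^ k 0 * δ ^ k 1 * β ^ k 2 * γ ^ k 3)) *
        ((SU2.mat X 0 0) ^ k 0 * (star (SU2.mat X 0 0)) ^ k 1 * (SU2.mat X 0 1) ^ k 2 *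
          (star (SU2.mat X 0 1)) ^ k 3) := by
    intro X
    have := Finset.sum_pow_eq_sum_piAntidiag (Finset.univ : Finset (Fin 4))
      ![α * SU2.mat X 0 0, δ * star (SU2.mat X 0 0), β * SU2.mat X 0 1,
      γ * star (SU2.mat X 0 1)] (2 * m)
    rw [Fin.sum_univ_four] at this
    simp only [Fin.prod_univ_four] at this
    refine Eq.trans this ?_
    refine Finset.sum_congr rfl fun k _ => ?_
    simp [mul_pow]
    ring
  simp_rw [e]
  rw [integral_finsetSum]
  swap
  · intro i _; exact su2_integrable μ (by fun_prop)
  simp_rw [integral_const_mul]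
  have hinj : Function.Injective (fun x : ℕ × ℕ => (![x.1, x.1, x.2, x.2] : Fin 4 → ℕ)) := by
    rintro ⟨a, b⟩ ⟨c, d⟩ h
    have h0 := congrFun h 0
    have h2 := congrFun h 2
    simp at h0 h2
    simp [h0, h2]
  rw [← Finset.sum_subset (s₁ := (Finset.HasAntidiagonal.antidiagonal m).image
    (fun x : ℕ × ℕ => (![x.1, x.1, x.2, x.2] : Fin 4 → ℕ)))]
  · rw [Finset.sum_image (hinj.injOn), Finset.Nat.sum_antidiagonal_eq_sum_range_succ_mk, add_pow,
      Finset.mul_sum]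
    refine Finset.sum_congr rfl fun i hi => ?_
    have hi' : i ≤ m := by have := Finset.mem_range.1 hi; omega
    obtain ⟨j, rfl⟩ := Nat.exists_eq_add_of_le hi'
    rw [Nat.add_sub_cancel_left]
    change _ * mom μ i i j j = _
    rw [mom_diag, multinomial_univ_cast _ (2 * (i + j)) (by simp [Fin.sum_univ_four]; ring),
      Nat.choose_symm_add, Nat.add_choose]
    rw [Nat.cast_div (Nat.factorial_mul_factorial_dvd_factorial_add i j)
      (by exact_mod_cast mul_ne_zero (Nat.factorial_ne_zero _) (Nat.factorial_ne_zero _))]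
    have f1 : ((i + j).factorial : ℂ) ≠ 0 := by exact_mod_cast Nat.factorial_ne_zero _
    have f2 : ((i + j + 1).factorial : ℂ) ≠ 0 := by exact_mod_cast Nat.factorial_ne_zero _
    have f3 : (i.factorial : ℂ) ≠ 0 := by exact_mod_cast Nat.factorial_ne_zero _
    have f4 : (j.factorial : ℂ) ≠ 0 := by exact_mod_cast Nat.factorial_ne_zero _
    simp [Fin.prod_univ_four, mul_pow]
    field_simp
  · intro k hk
    simp only [Finset.mem_image, Finset.HasAntidiagonal.mem_antidiagonal, Prod.exists] at hk
    obtain ⟨a, b, hab, rfl⟩ := hk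
    simp [Fin.sum_univ_four]; omega
  · intro k hk hk'
    change _ * mom μ (k 0) (k 1) (k 2) (k 3) = _
    rw [mom_zero, mul_zero]
    rintro ⟨h1, h2⟩
    apply hk'
    simp [Fin.sum_univ_four] at hk
    simp only [Finset.mem_image, Finset.HasAntidiagonal.mem_antidiagonal, Prod.exists]
    refine ⟨k 0, k 2, by omega, ?_⟩
    ext i; fin_cases i <;> simp [h1, h2]

lemma coeff_mono (k : Fin 3 → ℕ) (c : ℂ) (s : Fin 3 → ℕ) :
    MvPolynomial.coeff (Finsupp.equivFunOnFinite.symm s)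
      (MvPolynomial.C c * ∏ i, (MvPolynomial.X i : MvPolynomial (Fin 3) ℂ) ^ k i) =
      if k = s then c else 0 := by
  have : ∏ i, (MvPolynomial.X i : MvPolynomial (Fin 3) ℂ) ^ k i =
      MvPolynomial.monomial (Finsupp.equivFunOnFinite.symm k) 1 := by
    rw [MvPolynomial.monomial_eq, Finsupp.prod_fintype _ _ (by simp)]
    simp
  rw [this, MvPolynomial.coeff_C_mul, MvPolynomial.coeff_monomial]
  simp [Finsupp.equivFunOnFinite.symm.injective.eq_iff]

/-- main integral -/
lemma main_int (μ : Measure SU2) [μ.IsHaarMeasure] [IsProbabilityMeasure μ] (p q r : ℕ)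
    (v : Fin 3 → Fin 2 → ℂ) (D : Fin 3 → Fin 3 → ℂ)
    (hD : ∀ i j, D i j = (v i 0 * v j 1 - v i 1 * v j 0) * star (v i 0 * v j 1 - v i 1 * v j 0)) :
    ∫ X : SU2, ∏ i, (star (v i) ⬝ᵥ (SU2.mat X).mulVec (v i)) ^ (![p + r, p + q, q + r] i) ∂μ
    = D 0 1 ^ p * D 1 2 ^ q * D 0 2 ^ r *
      ((p + q).factorial * (q + r).factorial * (p + r).factorial)
          / ((p + q + r + 1).factorial * p.factorial * q.factorial * r.factorial) := by
  set m := p + q + r with hm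
  set cat : ℂ := ((2 * m).factorial : ℂ) / (m.factorial * (m + 1).factorial) with hcat
  have hcont : ∀ i, Continuous fun X : SU2 => star (v i) ⬝ᵥ (SU2.mat X).mulVec (v i) := by
    intro i
    simp only [dotProduct, mulVec, Fin.sum_univ_two]
    fun_prop
  let P : MvPolynomial (Fin 3) ℂ := ∑ k ∈ Finset.piAntidiag Finset.univ (2 * m),
    MvPolynomial.C ((Nat.multinomial Finset.univ k : ℂ) *
      ∫ X : SU2, ∏ i, (star (v i) ⬝ᵥ (SU2.mat X).mulVec (v i)) ^ (k i) ∂μ) *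
      ∏ i, (MvPolynomial.X i) ^ k i
  let Q : MvPolynomial (Fin 3) ℂ := ∑ k ∈ Finset.piAntidiag (Finset.univ : Finset (Fin 3)) m,
    MvPolynomial.C (cat * (Nat.multinomial Finset.univ k : ℂ) *
      (D 0 1 ^ k 0 * D 1 2 ^ k 1 * D 0 2 ^ k 2)) *
      ∏ i, (MvPolynomial.X i) ^ (![k 0 + k 2, k 0 + k 1, k 1 + k 2] i)
  have hPQ : P = Q := by
    apply MvPolynomial.funext
    intro t
    have h1 : MvPolynomial.eval t P =
        ∫ X : SU2, (∑ i, t i * (star (v i) ⬝ᵥ (SU2.mat X).mulVec (v i))) ^ (2 * m) ∂μ := by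
      simp_rw [Finset.sum_pow_eq_sum_piAntidiag]
      rw [integral_finsetSum]
      swap
      · intro i _; exact su2_integrable μ (by fun_prop)
      simp only [P, map_sum, map_mul, MvPolynomial.eval_C, map_prod, map_pow, MvPolynomial.eval_X]
      refine Finset.sum_congr rfl fun k _ => ?_
      simp_rw [mul_pow, Finset.prod_mul_distrib, integral_const_mul]
      ring
    have h2 : MvPolynomial.eval t Q = cat *
        (t 0 * t 1 * D 0 1 + t 1 * t 2 * D 1 2 + t 0 * t 2 * D 0 2) ^ m := by
      have := Finset.sum_pow_eq_sum_piAntidiag (Finset.univ : Finset (Fin 3))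
        ![t 0 * t 1 * D 0 1, t 1 * t 2 * D 1 2, t 0 * t 2 * D 0 2] m
      rw [Fin.sum_univ_three] at this
      simp only [Fin.prod_univ_three] at this
      refine Eq.trans ?_ (congrArg (cat * ·) this).symm
      simp only [Q, map_sum, map_mul, MvPolynomial.eval_C, map_prod, map_pow, MvPolynomial.eval_X,
        Finset.mul_sum]
      refine Finset.sum_congr rfl fun k _ => ?_
      simp [Fin.prod_univ_three, mul_pow, pow_add]
      ring
    have h3 := cat_int μ m (∑ i, t i * (star (v i 0) * v i 0)) (∑ i, t i * (star (v i 1) * v i 1))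
      (∑ i, t i * (star (v i 0) * v i 1)) (-∑ i, t i * (star (v i 1) * v i 0))
    rw [h1, h2]
    refine Eq.trans ?_ (h3.trans ?_)
    · congr 1; ext X
      congr 1
      obtain ⟨e1, e2, -⟩ := su2_form X
      simp only [dotProduct, mulVec, Fin.sum_univ_two, Fin.sum_univ_three, e1, e2, Pi.star_apply]
      ring
    · rw [hcat]
      congr 2
      simp only [Fin.sum_univ_three, hD, star_sub, star_mul']
      ring
  have hP : MvPolynomial.coeff (Finsupp.equivFunOnFinite.symm ![p + r, p + q, q + r]) P =
      (Nat.multinomial Finset.univ ![p + r, p + q, q + r] : ℂ) *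
      ∫ X : SU2, ∏ i, (star (v i) ⬝ᵥ (SU2.mat X).mulVec (v i)) ^ (![p + r, p + q, q + r] i) ∂μ := by
    simp only [P, MvPolynomial.coeff_sum, coeff_mono]
    rw [Finset.sum_ite_eq_of_mem']
    simp [Fin.sum_univ_three]; omega
  have hQ : MvPolynomial.coeff (Finsupp.equivFunOnFinite.symm ![p + r, p + q, q + r]) Q =
      cat * (Nat.multinomial Finset.univ ![p, q, r] : ℂ) * (D 0 1 ^ p * D 1 2 ^ q * D 0 2 ^ r) := by
    simp only [Q, MvPolynomial.coeff_sum, coeff_mono]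
    rw [Finset.sum_eq_single ![p, q, r]]
    · simp
    · intro k hk hne
      rw [if_neg]
      intro h
      apply hne
      have h0 := congrFun h 0
      have h1 := congrFun h 1
      have h2 := congrFun h 2
      simp at h0 h1 h2
      ext i
      fin_cases i <;> simp <;> omega
    · intro h
      exfalso; apply h
      simp [Fin.sum_univ_three, hm]
  rw [hPQ, hQ] at hP
  rw [multinomial_univ_cast _ m (by simp [Fin.sum_univ_three, hm]),
    multinomial_univ_cast _ (2 * m) (by simp [Fin.sum_univ_three, hm]; omega), hcat] at hP
  have F : ∀ n : ℕ, (n.factorial : ℂ) ≠ 0 := fun n => by exact_mod_cast Nat.factorial_ne_zero _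
  have g1 := F p
  have g2 := F q
  have g3 := F r
  have g4 := F (p + q)
  have g5 := F (q + r)
  have g6 := F (p + r)
  have g7 := F m
  have g8 := F (m + 1)
  have g9 := F (2 * m)
  generalize (∫ X : SU2, ∏ i, (star (v i) ⬝ᵥ (SU2.mat X).mulVec (v i)) ^
    (![p + r, p + q, q + r] i) ∂μ) = J at hP ⊢
  simp only [Fin.prod_univ_three, Matrix.cons_val] at hP
  field_simp at hP ⊢
  linear_combination -hP

lemma coh (n : Fin 3 → ℝ) (w : Fin 2 → ℂ) (hn : ∑ j, n j ^ 2 = 1) (h : IsCoherentState n w) :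
    w 0 * star (w 0) = (1 + n 2) / 2 ∧ w 1 * star (w 1) = (1 - n 2) / 2 ∧
    w 0 * star (w 1) = (n 0 - n 1 * I) / 2 ∧ w 1 * star (w 0) = (n 0 + n 1 * I) / 2 := by
  obtain ⟨h1, h2⟩ := h
  have a := congrFun h1 0
  have b := congrFun h1 1
  have hn' : (n 0 : ℂ) ^ 2 + n 1 ^ 2 + n 2 ^ 2 = 1 := by
    rw [Fin.sum_univ_three] at hn; exact_mod_cast hn
  simp [dotSigma, Fin.sum_univ_three, pauli, mulVec, dotProduct, Fin.sum_univ_two] at a b h2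
  have a' := congrArg (starRingEnd ℂ) a
  have b' := congrArg (starRingEnd ℂ) b
  simp at a' b'
  simp only [RCLike.star_def]
  generalize starRingEnd ℂ (w 0) = c0 at *
  generalize starRingEnd ℂ (w 1) = c1 at *
  have hI := Complex.I_mul_I
  have hR : w 0 * c1 = (n 0 - n 1 * I) / 2 := by
    linear_combination -(a * c1 + b' * w 0) / 2 + (n 0 - n 1 * I) / 2 * h2
  have hR' : w 1 * c0 = (n 0 + n 1 * I) / 2 := by
    linear_combination -(a' * w 1 + b * c0) / 2 + (n 0 + n 1 * I) / 2 * h2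
  have hP : w 0 * c0 = (1 + n 2) / 2 := by
    linear_combination (-(a * c0) + b * c1 + (n 0 - n 1 * I) * hR' - (n 0 + n 1 * I) * hR + (1 + n 2) * h2) / 2
  refine ⟨hP, ?_, hR, hR'⟩
  linear_combination h2 - hP

/-- the squared norm of the coherent triangle intertwiner,
`f_Δ = ∫_{SU(2)} ∏ᵢ ⟨nᵢ|X|nᵢ⟩^{2kᵢ} dX` (normalized Haar measure), is the explicit
nonnegative real number
`((1-n₁·n₂)^p (1-n₂·n₃)^q (1-n₁·n₃)^r / 2^{p+q+r}) · (p+q)!(q+r)!(p+r)!/((p+q+r+1)!p!q!r!)`,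
where `p = k₁+k₂-k₃`, `q = k₂+k₃-k₁`, `r = k₁+k₃-k₂` (so `2k₁ = p+r`, `2k₂ = p+q`,
`2k₃ = q+r`). -/
theorem stmt_12 (μ : Measure SU2) [μ.IsHaarMeasure] [IsProbabilityMeasure μ]
    (n : Fin 3 → Fin 3 → ℝ) (hn : ∀ i, ∑ j, n i j ^ 2 = 1)
    (k : Fin 3 → ℝ) (p q r : ℕ)
    (hk1 : 2 * k 0 = (p : ℝ) + r) (hk2 : 2 * k 1 = (p : ℝ) + q) (hk3 : 2 * k 2 = (q : ℝ) + r)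
    (twok : Fin 3 → ℕ) (ht1 : twok 0 = p + r) (ht2 : twok 1 = p + q) (ht3 : twok 2 = q + r)
    (hclosure : (fun j => ∑ i, k i * n i j) = 0)
    (v : Fin 3 → Fin 2 → ℂ) (hv : ∀ i, IsCoherentState (n i) (v i)) :
    ∫ X : SU2, (∏ i : Fin 3, (star (v i) ⬝ᵥ (SU2.mat X).mulVec (v i)) ^ twok i) ∂μ
      = (((1 - (∑ j, n 0 j * n 1 j)) ^ p * (1 - (∑ j, n 1 j * n 2 j)) ^ q
            * (1 - (∑ j, n 0 j * n 2 j)) ^ r / 2 ^ (p + q + r)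
          * ((p + q).factorial * (q + r).factorial * (p + r).factorial)
          / ((p + q + r + 1).factorial * p.factorial * q.factorial * r.factorial) : ℝ) : ℂ)
    ∧ (0 : ℝ) ≤ (1 - (∑ j, n 0 j * n 1 j)) ^ p * (1 - (∑ j, n 1 j * n 2 j)) ^ q
            * (1 - (∑ j, n 0 j * n 2 j)) ^ r / 2 ^ (p + q + r)
          * ((p + q).factorial * (q + r).factorial * (p + r).factorial)
          / ((p + q + r + 1).factorial * p.factorial * q.factorial * r.factorial) := by
  have hD : ∀ i j, (v i 0 * v j 1 - v i 1 * v j 0) * star (v i 0 * v j 1 - v i 1 * v j 0) =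
      (((1 - ∑ l, n i l * n j l) / 2 : ℝ) : ℂ) := by
    intro i j
    obtain ⟨a1, a2, a3, a4⟩ := coh _ _ (hn i) (hv i)
    obtain ⟨b1, b2, b3, b4⟩ := coh _ _ (hn j) (hv j)
    have hI := Complex.I_mul_I
    have e : (v i 0 * v j 1 - v i 1 * v j 0) * star (v i 0 * v j 1 - v i 1 * v j 0) =
        (v i 0 * star (v i 0)) * (v j 1 * star (v j 1)) + (v i 1 * star (v i 1)) * (v j 0 * star (v j 0))
        - (v i 0 * star (v i 1)) * (v j 1 * star (v j 0))
        - (v i 1 * star (v i 0)) * (v j 0 * star (v j 1)) := by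
      simp only [star_sub, star_mul']; ring
    rw [e, a1, a2, a3, a4, b1, b2, b3, b4, Fin.sum_univ_three]
    push_cast
    linear_combination (n i 1 * n j 1 / 2 : ℂ) * hI
  have hnn : ∀ i j, 0 ≤ 1 - ∑ l, n i l * n j l := by
    intro i j
    have h1 := hn i
    have h2 := hn j
    rw [Fin.sum_univ_three] at *
    nlinarith [sq_nonneg (n i 0 - n j 0), sq_nonneg (n i 1 - n j 1), sq_nonneg (n i 2 - n j 2)]
  have htw : twok = ![p + r, p + q, q + r] := by
    ext i; fin_cases i <;> simp [ht1, ht2, ht3]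
  constructor
  · have := main_int μ p q r v _ (fun i j => rfl)
    rw [htw, this]
    simp only [hD]
    push_cast
    simp only [div_pow, pow_add]
    ring
  · have h1 := hnn 0 1
    have h2 := hnn 1 2
    have h3 := hnn 0 2
    positivity
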